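/- arXiv:1603.00454 — 2 statements merged into one kernel-verified Lean document; each statement's English description precedes it below -/
import Mathlib

section
/- If A ⊆ Z is definable in (Z,+,<,0), then either A is definable in (Z,+,0), or ℕ is definable in (Z,+,0,A). -/
open FirstOrder

/-- Function symbols of the language of `(ℤ,+,0)`: one constant (`0`) and one binary function
(`+`). -/
def grpFunc : ℕ → Type
  | 0 => Unit
  | 2 => Unit
  | _ => Empty

/-- The language of `(ℤ,+,0)`. -/
def LangGrp : FirstOrder.Language := ⟨grpFunc, fun _ => Empty⟩

noncomputable instance : LangGrp.Structure ℤ where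
  funMap {n} f x :=
    match n, f with
    | 0, _ => 0
    | 2, _ => x 0 + x 1
  RelMap {n} r _ := r.elim

/-- The language of `(ℤ,+,<,0)`. -/
def LangOrdGrp : FirstOrder.Language := LangGrp.sum FirstOrder.Language.order

noncomputable instance : FirstOrder.Language.order.Structure ℤ :=
  FirstOrder.Language.orderStructure ℤ

noncomputable instance : LangOrdGrp.Structure ℤ :=
  inferInstanceAs ((LangGrp.sum FirstOrder.Language.order).Structure ℤ)

/-- Presburger sets: subsets of `ℤⁿ` definable with parameters in `(ℤ,+,<,0)`. -/
def IsPresburger {n : ℕ} (s : Set ((Fin n) → ℤ)) : Prop :=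
  Set.Definable (Set.univ : Set ℤ) LangOrdGrp s

/-- Definability with parameters in `(ℤ,+,0)`. -/
def IsGroupDefinable {n : ℕ} (s : Set ((Fin n) → ℤ)) : Prop :=
  Set.Definable (Set.univ : Set ℤ) LangGrp s

/-- The language of `(ℤ,+,0,A)` with `A` an `n`-ary predicate. -/
def LangGrpRel (n : ℕ) : FirstOrder.Language :=
  ⟨grpFunc, fun m => if m = n then Unit else Empty⟩

/-- The structure `(ℤ,+,0,A)`. -/
noncomputable def relStructure {n : ℕ} (A : Set (Fin n → ℤ)) : (LangGrpRel n).Structure ℤ where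
  funMap {m} f x :=
    match m, f with
    | 0, _ => 0
    | 2, _ => x 0 + x 1
  RelMap {m} _ x := if h : m = n then (fun i : Fin n => x (Fin.cast h.symm i)) ∈ A else False

/-- `A ⊆ ℤⁿ` defines the ordering if `ℕ` (the set of nonnegative integers) is definable with
parameters in the expansion `(ℤ,+,0,A)`. -/
def DefinesOrdering {n : ℕ} (A : Set (Fin n → ℤ)) : Prop :=
  letI := relStructure A
  Set.Definable (Set.univ : Set ℤ) (LangGrpRel n) {f : Fin 1 → ℤ | 0 ≤ f 0}

/-- A subset of `ℤ` is Presburger if the corresponding unary set is definable in `(ℤ,+,<,0)`. -/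
def IsPresburger1 (A : Set ℤ) : Prop := IsPresburger {f : Fin 1 → ℤ | f 0 ∈ A}

/-- A subset of `ℤ` is definable in `(ℤ,+,0)`. -/
def IsGroupDefinable1 (A : Set ℤ) : Prop := IsGroupDefinable {f : Fin 1 → ℤ | f 0 ∈ A}

/-- A subset of `ℤ` defines the ordering. -/
def DefinesOrdering1 (A : Set ℤ) : Prop := DefinesOrdering {f : Fin 1 → ℤ | f 0 ∈ A}

/-
Semilinear sets are closed under Boolean operations and projections, so every set definable in
`(ℤ,+,<,0)` is semilinear. A semilinear `A ⊆ ℤ` agrees with a periodic set `D₁` near `-∞` and with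
a periodic set `D₂` near `+∞`, with a common period `p`. If `D₁ = D₂`, then `A` differs from a
finite union of residue classes by finitely many points, so it is definable in `(ℤ,+,0)`. Otherwise
some `r` lies in exactly one of `D₁` and `D₂`, and up to finitely many points the preimage of `A`
under `z ↦ p z + r` is `ℕ` or its complement.
-/

section Semilinear

open Set FirstOrder.Language FirstOrder.Language.Structure

/-- A first-order structure on an abelian group is semilinear if every function symbol is
interpreted by an affine map and every relation symbol by a semilinear set. It is the input to
quantifier elimination in the form: all definable sets are semilinear. -/
structure IsSemilinearStructure (L : FirstOrder.Language) (M : Type*) [L.Structure M]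
    [AddCommGroup M] : Prop where
  exists_funMap_eq_add {n : ℕ} (f : L.Functions n) :
    ∃ (k : M) (u : (Fin n → M) →+ M), ∀ x, funMap f x = k + u x
  isSemilinearSet_relMap {n : ℕ} (R : L.Relations n) :
    IsSemilinearSet {x : Fin n → M | RelMap R x}

theorem isSemilinearSet_setOf_add_mem {M N : Type*} [AddCommGroup M] [AddCommGroup N]
    [AddMonoid.FG N] {s : Set M} (hs : IsSemilinearSet s) (k : M) (u : N →+ M) :
    IsSemilinearSet {v | k + u v ∈ s} := by
  convert (hs.vadd (-k)).preimage u using 1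
  ext v
  simp [mem_vadd_set_iff_neg_vadd_mem]

theorem isSemilinearSet_forall_snoc {M α : Type*} [AddCommGroup M] [AddMonoid.FG M] [Finite α]
    {n : ℕ} {p : (α → M) → (Fin (n + 1) → M) → Prop}
    (hp : IsSemilinearSet {v : α ⊕ Fin (n + 1) → M | p (v ∘ Sum.inl) (v ∘ Sum.inr)}) :
    IsSemilinearSet {v : α ⊕ Fin n → M | ∀ x, p (v ∘ Sum.inl) (Fin.snoc (v ∘ Sum.inr) x)} := by
  convert (hp.compl.image (LinearMap.funLeft ℕ M (Sum.map id Fin.castSucc))).compl using 1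
  ext v
  simp only [mem_ofPred_eq, mem_compl_iff, mem_image, not_exists, not_and, not_imp_not]
  constructor
  · rintro h w rfl
    have hw : Fin.snoc (w ∘ Sum.inr ∘ Fin.castSucc) (w (Sum.inr (Fin.last n))) = w ∘ Sum.inr :=
      Fin.snoc_init_self (w ∘ Sum.inr)
    exact hw ▸ h (w (Sum.inr (Fin.last n)))
  · intro h x
    refine h (Sum.elim (v ∘ Sum.inl) (Fin.snoc (v ∘ Sum.inr) x)) ?_
    ext (a | i) <;> simp [LinearMap.funLeft]

namespace IsSemilinearStructure

variable {L : FirstOrder.Language} {M α : Type*} [L.Structure M] [AddCommGroup M]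

theorem withConstants (hL : IsSemilinearStructure L M) (P : Set M) :
    IsSemilinearStructure L[[P]] M where
  exists_funMap_eq_add {n} f := by
    match n, f with
    | _, Sum.inl f => exact hL.exists_funMap_eq_add f
    | 0, Sum.inr c => exact ⟨c, 0, fun _ => (add_zero c.1).symm⟩
  isSemilinearSet_relMap
    | Sum.inl R => hL.isSemilinearSet_relMap R
    | Sum.inr R => R.elim

theorem exists_realize_eq_add (hL : IsSemilinearStructure L M) (t : L.Term α) :
    ∃ (k : M) (u : (α → M) →+ M), ∀ v, t.realize v = k + u v := by
  induction t with
  | var a => exact ⟨0, Pi.evalAddMonoidHom _ a, by simp⟩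
  | func f ts ih =>
    choose k u hu using ih
    obtain ⟨c, g, hg⟩ := hL.exists_funMap_eq_add f
    refine ⟨c + g k, g.comp (AddMonoidHom.pi u), fun v => ?_⟩
    have hts : (fun i => (ts i).realize v) = k + AddMonoidHom.pi u v := funext fun i => hu i v
    rw [Term.realize_func, hts, hg, map_add, add_assoc, AddMonoidHom.comp_apply]

variable [AddMonoid.FG M] [Finite α]

theorem isSemilinearSet_boundedFormula_realize (hL : IsSemilinearStructure L M) {n : ℕ}
    (φ : L.BoundedFormula α n) :
    IsSemilinearSet {v : α ⊕ Fin n → M | φ.Realize (v ∘ Sum.inl) (v ∘ Sum.inr)} := by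
  induction φ with
  | falsum => exact .empty
  | equal t₁ t₂ =>
    obtain ⟨k₁, u₁, h₁⟩ := hL.exists_realize_eq_add t₁
    obtain ⟨k₂, u₂, h₂⟩ := hL.exists_realize_eq_add t₂
    simpa [BoundedFormula.Realize, h₁, h₂] using isSemilinearSet_setOfPred_eq k₁ k₂ u₁ u₂
  | rel R ts =>
    choose k u hu using fun i => hL.exists_realize_eq_add (ts i)
    have hts (v) : (fun i => (ts i).realize v) = k + AddMonoidHom.pi u v :=
      funext fun i => hu i v
    simpa [BoundedFormula.Realize, hts] using
      isSemilinearSet_setOf_add_mem (hL.isSemilinearSet_relMap R) k (AddMonoidHom.pi u)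
  | imp φ ψ hφ hψ =>
    convert hφ.compl.union hψ using 1
    ext v
    simp [BoundedFormula.Realize, imp_iff_not_or]
  | all φ hφ => exact isSemilinearSet_forall_snoc hφ

theorem isSemilinearSet_of_definable (hL : IsSemilinearStructure L M) {P : Set M}
    {s : Set (α → M)} (hs : P.Definable L s) : IsSemilinearSet s := by
  obtain ⟨φ, rfl⟩ := hs
  have hφ := (hL.withConstants P).isSemilinearSet_boundedFormula_realize φ
  convert hφ.image (LinearMap.funLeft ℕ M Sum.inl) using 1
  ext v
  constructor
  · intro hv
    exact ⟨Sum.elim v default, hv, rfl⟩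
  · rintro ⟨w, hw, rfl⟩
    simpa [Formula.Realize, Unique.eq_default] using! hw

end IsSemilinearStructure

theorem isSemilinearSet_nonneg : IsSemilinearSet {z : ℤ | 0 ≤ z} := by
  have h : range (Nat.castAddMonoidHom ℤ) = {z : ℤ | 0 ≤ z} := by
    ext z
    exact ⟨fun ⟨n, hn⟩ => hn ▸ Int.natCast_nonneg n, fun hz => ⟨z.toNat, Int.toNat_of_nonneg hz⟩⟩
  rw [← h, ← image_univ]
  exact IsSemilinearSet.univ.image _

theorem isSemilinearStructure_langOrdGrp : IsSemilinearStructure LangOrdGrp ℤ where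
  exists_funMap_eq_add {n} f := by
    match n, f with
    | 0, Sum.inl _ => exact ⟨0, 0, fun _ => rfl⟩
    | 2, Sum.inl _ =>
      exact ⟨0, Pi.evalAddMonoidHom (fun _ => ℤ) 0 + Pi.evalAddMonoidHom (fun _ => ℤ) 1,
        fun x => by rw [zero_add]; rfl⟩
    | 1, Sum.inl f => exact f.elim
    | n + 3, Sum.inl f => exact f.elim
    | _, Sum.inr f => exact f.elim
  isSemilinearSet_relMap
    | Sum.inl R => R.elim
    | Sum.inr .le => by
      convert isSemilinearSet_nonneg.preimage
        (Pi.evalAddMonoidHom (fun _ : Fin 2 => ℤ) 1 - Pi.evalAddMonoidHom _ 0) using 1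
      ext x
      exact (sub_nonneg (a := x 1)).symm

theorem IsPresburger1.isSemilinearSet {A : Set ℤ} (hA : IsPresburger1 A) : IsSemilinearSet A :=
  (isSemilinearStructure_langOrdGrp.isSemilinearSet_of_definable hA).preimage
    (Pi.constAddMonoidHom (Fin 1) ℤ)

end Semilinear

section Periodic

open Filter Function Set

theorem exists_periodic_eventuallyEq_atTop {A : Set ℤ} (hA : IsSemilinearSet A) :
    ∃ p : ℕ, 0 < p ∧ ∃ D : Set ℤ, Periodic (· ∈ D) (p : ℤ) ∧ A =ᶠ[atTop] D := by
  obtain ⟨k, p, hp, hper⟩ := Nat.isSemilinearSet_iff_ultimately_periodic.1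
    (hA.preimage (Nat.castAddMonoidHom ℤ))
  have htail : Periodic (fun n : ℕ => (k + n : ℤ) ∈ A) p := fun n => by
    simpa [add_assoc] using (hper (k + n) (by lia)).symm
  refine ⟨p, hp, {x | k + (x - k) % p ∈ A}, fun x => ?_, ?_⟩
  · simp [add_sub_right_comm]
  · rw [eventuallyEq_set]
    filter_upwards [eventually_ge_atTop (k : ℤ)] with x hx
    obtain ⟨n, rfl⟩ := Int.le.dest hx
    simpa using (htail.map_mod_nat n).symm

theorem exists_periodic_eventuallyEq_atBot {A : Set ℤ} (hA : IsSemilinearSet A) :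
    ∃ p : ℕ, 0 < p ∧ ∃ D : Set ℤ, Periodic (· ∈ D) (p : ℤ) ∧ A =ᶠ[atBot] D := by
  obtain ⟨p, hp, D, hD, hAD⟩ :=
    exists_periodic_eventuallyEq_atTop (hA.preimage (-AddMonoidHom.id ℤ))
  refine ⟨p, hp, {x | -x ∈ D}, fun x => ?_, ?_⟩
  · simpa [neg_add, sub_eq_add_neg, add_comm] using hD.sub_eq (-x)
  · rw [eventuallyEq_set]
    filter_upwards [tendsto_neg_atBot_atTop.eventually hAD.mem_iff] with x hx
    simpa using hx

theorem exists_periodic_eventuallyEq_atBot_atTop {A : Set ℤ} (hA : IsSemilinearSet A) :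
    ∃ p : ℕ, 0 < p ∧ ∃ D₁ D₂ : Set ℤ, (Periodic (· ∈ D₁) (p : ℤ) ∧ A =ᶠ[atBot] D₁) ∧
      Periodic (· ∈ D₂) (p : ℤ) ∧ A =ᶠ[atTop] D₂ := by
  obtain ⟨p, hp, D₁, hD₁, hA₁⟩ := exists_periodic_eventuallyEq_atBot hA
  obtain ⟨q, hq, D₂, hD₂, hA₂⟩ := exists_periodic_eventuallyEq_atTop hA
  refine ⟨p * q, Nat.mul_pos hp hq, D₁, D₂, ⟨?_, hA₁⟩, ?_, hA₂⟩
  · simpa [mul_comm] using hD₁.nat_mul q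
  · simpa using hD₂.nat_mul p

theorem mul_add_mem_iff_of_periodic {D : Set ℤ} {p : ℤ} (hD : Periodic (· ∈ D) p) (z r : ℤ) :
    z * p + r ∈ D ↔ r ∈ D := by
  simpa [add_comm] using hD.int_mul z r

theorem eventuallyEq_setOf_mul_add_mem {l : Filter ℤ} {A D : Set ℤ} {p r : ℤ}
    (hl : Tendsto (fun z => z * p + r) l l) (hD : Periodic (· ∈ D) p) (hA : A =ᶠ[l] D) :
    {z | z * p + r ∈ A} =ᶠ[l] {_z | r ∈ D} := by
  rw [eventuallyEq_set]
  filter_upwards [hl.eventually hA.mem_iff] with z hz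
  exact hz.trans (mul_add_mem_iff_of_periodic hD z r)

theorem nonneg_eventuallyEq_cofinite_setOf_mul_add_mem {A D₁ D₂ : Set ℤ} {p r : ℤ} (hp : 0 < p)
    (hD₁ : Periodic (· ∈ D₁) p) (hA₁ : A =ᶠ[atBot] D₁) (hr₁ : r ∉ D₁)
    (hD₂ : Periodic (· ∈ D₂) p) (hA₂ : A =ᶠ[atTop] D₂) (hr₂ : r ∈ D₂) :
    {z | z * p + r ∈ A} =ᶠ[cofinite] {z | 0 ≤ z} := by
  have hbot : Tendsto (fun z => z * p + r) atBot atBot :=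
    tendsto_atBot_add_const_right _ r (tendsto_id.atBot_mul_const' hp)
  have htop : Tendsto (fun z => z * p + r) atTop atTop :=
    tendsto_atTop_add_const_right _ r (tendsto_id.atTop_mul_const' hp)
  rw [Int.cofinite_eq, eventuallyEq_set, eventually_sup]
  constructor
  · filter_upwards [(eventuallyEq_setOf_mul_add_mem hbot hD₁ hA₁).mem_iff,
      eventually_lt_atBot 0] with z hz hneg
    simpa [hr₁, hneg.not_ge] using hz
  · filter_upwards [(eventuallyEq_setOf_mul_add_mem htop hD₂ hA₂).mem_iff,
      eventually_ge_atTop 0] with z hz hnonneg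
    simpa [hr₂, hnonneg] using hz

end Periodic

section Definable

open Filter Function Set FirstOrder.Language FirstOrder.Language.Structure

theorem definable₁_of_finite {L : FirstOrder.Language} {M : Type*} [L.Structure M] {P s : Set M}
    (hs : s.Finite) (hsP : s ⊆ P) : P.Definable₁ L s := by
  induction s, hs using Set.Finite.induction_on with
  | empty => exact definable_empty
  | insert _ _ ih =>
    rw [insert_subset_iff] at hsP
    exact (Definable.singleton_of_mem L hsP.1).union (ih hsP.2)

theorem definable₁_of_eventuallyEq_cofinite {L : FirstOrder.Language} {M : Type*} [L.Structure M]
    {s t : Set M} (hs : (univ : Set M).Definable₁ L s) (hst : s =ᶠ[cofinite] t) :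
    (univ : Set M).Definable₁ L t := by
  have hfin : {x | ¬(x ∈ s ↔ x ∈ t)}.Finite := eventually_cofinite.1 hst.mem_iff
  have hdiff : (univ : Set M).Definable₁ L (s \ t) :=
    definable₁_of_finite (hfin.subset fun x hx h => hx.2 (h.1 hx.1)) (subset_univ _)
  have hdiff' : (univ : Set M).Definable₁ L (t \ s) :=
    definable₁_of_finite (hfin.subset fun x hx h => hx.2 (h.2 hx.1)) (subset_univ _)
  have ht : s \ (s \ t) ∪ t \ s = t := by
    rw [sdiff_sdiff_right_self, inter_comm, inter_union_sdiff]
  have hunion : (univ : Set M).Definable₁ L (s \ (s \ t) ∪ t \ s) :=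
    (hs.sdiff hdiff).union hdiff'
  rwa [ht] at hunion

theorem definableFun_mul_natCast_add {α : Type*} [Finite α] (p : ℕ) (r : ℤ) (a : α) :
    (univ : Set ℤ).DefinableFun LangGrp fun v : α → ℤ => v a * p + r := by
  induction p with
  | zero => simpa using LangGrp.definableFun_const α (mem_univ r)
  | succ p ih =>
    have hadd : (univ : Set ℤ).DefinableFun LangGrp fun x : Fin 2 → ℤ => x 0 + x 1 :=
      .of_empty (DefinableFun.fun_symbol (L := LangGrp) (n := 2) ())
    have hpair : (univ : Set ℤ).DefinableMap LangGrp
        fun v : α → ℤ => ![v a, v a * p + r] := by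
      simp only [DefinableMap, Fin.forall_fin_two]
      exact ⟨DefinableFun.proj LangGrp, ih⟩
    convert DefinableFun.comp hpair hadd using 2 with v
    simp only [Matrix.cons_val_zero, Matrix.cons_val_one]
    push_cast
    ring

theorem definable₁_of_periodic {p : ℕ} (hp : 0 < p) {D : Set ℤ} (hD : Periodic (· ∈ D) (p : ℤ)) :
    (univ : Set ℤ).Definable₁ LangGrp D := by
  have hclass (r : ℤ) : (univ : Set ℤ).Definable LangGrp
      {x : Fin 1 → ℤ | ∃ y : Fin 1 → ℤ, x 0 = y 0 * p + r} :=
    Definable.exists_of_finite (β := Fin 1) <|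
      (DefinableFun.proj LangGrp (i := Sum.inl 0)).ofPred_eq
        (definableFun_mul_natCast_add p r (Sum.inr 0 : Fin 1 ⊕ Fin 1))
  classical
  change (univ : Set ℤ).Definable LangGrp {x : Fin 1 → ℤ | x 0 ∈ D}
  convert definable_biUnion_finset hclass {r ∈ Finset.Ico 0 (p : ℤ) | r ∈ D} using 1
  ext x
  simp only [mem_ofPred_eq, mem_iUnion, Finset.mem_filter, Finset.mem_Ico]
  constructor
  · intro hx
    have hp' : (0 : ℤ) < p := Int.natCast_pos.2 hp
    have hdiv : x 0 / p * p + x 0 % p = x 0 := Int.ediv_mul_add_emod (x 0) p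
    refine ⟨x 0 % p, ⟨⟨Int.emod_nonneg _ hp'.ne', Int.emod_lt_of_pos _ hp'⟩, ?_⟩,
      fun _ => x 0 / p, hdiv.symm⟩
    rwa [← mul_add_mem_iff_of_periodic hD (x 0 / p), hdiv]
  · rintro ⟨r, ⟨-, hr⟩, y, hy⟩
    rwa [hy, mul_add_mem_iff_of_periodic hD]

/-- The inclusion of the language of `(ℤ,+,0)` into the language of `(ℤ,+,0,A)`. -/
def grpToGrpRel (n : ℕ) : LangGrp →ᴸ LangGrpRel n where
  onFunction _ f := f
  onRelation _ R := R.elim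

theorem isExpansionOn_grpToGrpRel {n : ℕ} (A : Set (Fin n → ℤ)) :
    letI := relStructure A
    (grpToGrpRel n).IsExpansionOn ℤ :=
  let _ := relStructure A
  { map_onFunction := fun {n} f x => by
      match n, f with
      | 0, _ => rfl
      | 2, _ => rfl
    map_onRelation := fun R => R.elim }

theorem definable_relStructure {n : ℕ} (A : Set (Fin n → ℤ)) :
    letI := relStructure A
    (univ : Set ℤ).Definable (LangGrpRel n) A := by
  let _ := relStructure A
  let R : (LangGrpRel n)[[(univ : Set ℤ)]].Relations n := Sum.inl (cast (if_pos rfl).symm ())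
  refine ⟨R.formula Term.var, Set.ext fun x => ?_⟩
  rw [mem_ofPred_eq, Formula.realize_rel]
  change x ∈ A ↔ if _h : n = n then x ∈ A else False
  rw [dif_pos rfl]

section Expansion

variable {L : FirstOrder.Language} [L.Structure ℤ]

theorem definable₁_nonneg_of_mem_of_notMem (φ : LangGrp →ᴸ L) [φ.IsExpansionOn ℤ]
    {A D₁ D₂ : Set ℤ} {p : ℕ} {r : ℤ} (hp : 0 < p) (hA : (univ : Set ℤ).Definable₁ L A)
    (hD₁ : Periodic (· ∈ D₁) (p : ℤ)) (hA₁ : A =ᶠ[atBot] D₁) (hr₁ : r ∉ D₁)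
    (hD₂ : Periodic (· ∈ D₂) (p : ℤ)) (hA₂ : A =ᶠ[atTop] D₂) (hr₂ : r ∈ D₂) :
    (univ : Set ℤ).Definable₁ L {z | 0 ≤ z} := by
  have haffine : (univ : Set ℤ).DefinableMap L fun (v : Fin 1 → ℤ) (_ : Fin 1) => v 0 * p + r :=
    fun _ => Definable.map_expansion (definableFun_mul_natCast_add p r 0) φ
  have hpull : (univ : Set ℤ).Definable₁ L {z | z * p + r ∈ A} := hA.preimage_map haffine
  exact definable₁_of_eventuallyEq_cofinite hpull <|
    nonneg_eventuallyEq_cofinite_setOf_mul_add_mem (Int.natCast_pos.2 hp) hD₁ hA₁ hr₁ hD₂ hA₂ hr₂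

theorem definable₁_nonneg_of_ne (φ : LangGrp →ᴸ L) [φ.IsExpansionOn ℤ]
    {A D₁ D₂ : Set ℤ} {p : ℕ} (hp : 0 < p) (hA : (univ : Set ℤ).Definable₁ L A)
    (hD₁ : Periodic (· ∈ D₁) (p : ℤ)) (hA₁ : A =ᶠ[atBot] D₁)
    (hD₂ : Periodic (· ∈ D₂) (p : ℤ)) (hA₂ : A =ᶠ[atTop] D₂) (hne : D₁ ≠ D₂) :
    (univ : Set ℤ).Definable₁ L {z | 0 ≤ z} := by
  obtain ⟨r, ⟨hr₁, hr₂⟩ | ⟨hr₂, hr₁⟩⟩ : (symmDiff D₁ D₂).Nonempty := symmDiff_nonempty.2 hne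
  · have hA' : (univ : Set ℤ).Definable₁ L Aᶜ := hA.compl
    exact definable₁_nonneg_of_mem_of_notMem φ hp hA' (hD₁.comp Not) hA₁.compl
      (not_not_intro hr₁) (hD₂.comp Not) hA₂.compl hr₂
  · exact definable₁_nonneg_of_mem_of_notMem φ hp hA hD₁ hA₁ hr₁ hD₂ hA₂ hr₂

end Expansion

end Definable

/-- every Presburger subset of `ℤ` is definable in `(ℤ,+,0)` or defines the
ordering. -/
theorem stmt2 (A : Set ℤ) (hA : IsPresburger1 A) :
    IsGroupDefinable1 A ∨ DefinesOrdering1 A := by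
  obtain ⟨p, hp, D₁, D₂, ⟨hD₁, hA₁⟩, hD₂, hA₂⟩ :=
    exists_periodic_eventuallyEq_atBot_atTop hA.isSemilinearSet
  by_cases hD : D₁ = D₂
  · subst hD
    have hcofinite : A =ᶠ[Filter.cofinite] D₁ := by
      rw [Int.cofinite_eq]
      exact Filter.eventually_sup.2 ⟨hA₁, hA₂⟩
    exact .inl <| definable₁_of_eventuallyEq_cofinite (definable₁_of_periodic hp hD₁)
      hcofinite.symm
  · let _ := relStructure {f : Fin 1 → ℤ | f 0 ∈ A}
    have := isExpansionOn_grpToGrpRel {f : Fin 1 → ℤ | f 0 ∈ A}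
    exact .inr <| definable₁_nonneg_of_ne (grpToGrpRel 1) hp (definable_relStructure _)
      hD₁ hA₁ hD₂ hA₂ hD
end

section
/- For any n ≥ 1: if A ⊆ Z^n is definable in (Z,+,<,0), then either A is definable in (Z,+,0), or ℕ is definable in the structure (Z,+,0,A). Equivalently, any structure on Z expanding (Z,+,0) and reduct of (Z,+,<,0) is interdefinable with (Z,+,0) or with (Z,+,<,0). -/
open FirstOrder

/-!
Let `L` be the language of `(ℤ,+,0,A)` and suppose that `ℕ` is not definable in that structure.

Eliminating quantifiers as in Presburger arithmetic, every definable predicate is decided by the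
residue of its argument modulo some `N` and the signs of finitely many integral affine functions.
On a fixed residue class, the fibres over the other coordinates of a definable set are therefore
cut out by signs of expressions `b j * t + u j x`. Each fibre is eventually constant in both
directions, and the two limits agree since `ℕ` is not definable: the fibre is finite or cofinite.
Complementing the cofinite fibres, suppose that all are finite.

The fibres have boundedly many maximal intervals, and in fact boundedly many elements. By
induction on the number of intervals, it suffices to find `l` such that eroding every fibre by `l`
destroys an interval. If for every `l` some fibre kept all of its intervals, a translate of it would
meet it in exactly one interval of length `l`, an overlap of the rightmost interval with the
translated leftmost one, and the single intervals arising in this way would define `ℕ`.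

The elements of a fibre then lie at bounded distance from the zeros of the `b j * t + u j x`, so
they solve finitely many linear equations, and which equations contribute is a condition on fewer
coordinates. Induction on the number of coordinates shows that every `L`-definable set is definable
in `(ℤ,+,0)`.
-/

section Definability

open Set

variable {M : Type*} {L : FirstOrder.Language} [L.Structure M] {α β ι : Type*}

/-- A predicate on tuples is definable, with parameters, when its extension is. Predicates rather
than sets, so that definability is proved by following the shape of a formula. -/
def DefinablePred (L : FirstOrder.Language) [L.Structure M] (P : (α → M) → Prop) : Prop :=
  univ.Definable L {v | P v}

/-- A definable family of subsets of `M`, indexed by `α`-tuples. The point `w` of the total space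
has its index in the coordinates `some i` and its fibre coordinate at `none`. -/
def DefinableFamily (L : FirstOrder.Language) [L.Structure M] (B : (α → M) → Set M) : Prop :=
  DefinablePred L fun w : Option α → M => w none ∈ B fun i => w (some i)

namespace DefinablePred

variable {P Q : (α → M) → Prop}

theorem of_iff (hP : DefinablePred L P) (h : ∀ v, P v ↔ Q v) : DefinablePred L Q :=
  (funext fun v => propext (h v) : P = Q) ▸ hP

theorem const (p : Prop) : DefinablePred L fun _ : α → M => p := by
  by_cases hp : p <;> simp [DefinablePred, hp]

theorem not (hP : DefinablePred L P) : DefinablePred L fun v => ¬ P v :=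
  hP.compl

theorem and (hP : DefinablePred L P) (hQ : DefinablePred L Q) :
    DefinablePred L fun v => P v ∧ Q v :=
  hP.inter hQ

theorem or (hP : DefinablePred L P) (hQ : DefinablePred L Q) :
    DefinablePred L fun v => P v ∨ Q v :=
  hP.union hQ

theorem iff (hP : DefinablePred L P) (hQ : DefinablePred L Q) :
    DefinablePred L fun v => P v ↔ Q v :=
  ((hP.and hQ).or (hP.not.and hQ.not)).of_iff fun _ => iff_iff_and_or_not_and_not.symm

theorem reindex (hP : DefinablePred L P) (σ : α → β) :
    DefinablePred L fun v : β → M => P fun i => v (σ i) :=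
  hP.preimage_comp σ

theorem comp [Finite α] (hP : DefinablePred L P) {g : (β → M) → α → M}
    (hg : ∀ i, univ.DefinableFun L fun v => g v i) : DefinablePred L fun v => P (g v) :=
  Definable.preimage_map hg hP

theorem exists_finite [Finite ι] {P : ι → (α → M) → Prop} (h : ∀ i, DefinablePred L (P i)) :
    DefinablePred L fun v => ∃ i, P i v := by
  simpa only [DefinablePred, ofPred_exists] using definable_iUnion_of_finite h

theorem forall_finite [Finite ι] {P : ι → (α → M) → Prop} (h : ∀ i, DefinablePred L (P i)) :
    DefinablePred L fun v => ∀ i, P i v := by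
  simpa only [DefinablePred, ofPred_forall] using definable_iInter_of_finite h

theorem exists_tuple [Finite β] {P : (α → M) → (β → M) → Prop}
    (h : DefinablePred L fun w : α ⊕ β → M => P (fun i => w (.inl i)) fun i => w (.inr i)) :
    DefinablePred L fun v => ∃ u, P v u :=
  Definable.exists_of_finite h

theorem exists_elem {P : (α → M) → M → Prop}
    (h : DefinablePred L fun w : Option α → M => P (fun i => w (some i)) (w none)) :
    DefinablePred L fun v => ∃ y, P v y :=
  (exists_tuple (P := fun v (u : Unit → M) => P v (u ()))
    (h.reindex (Equiv.optionEquivSumPUnit α))).of_iff fun _ =>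
      ⟨fun ⟨u, hu⟩ => ⟨u (), hu⟩, fun ⟨y, hy⟩ => ⟨fun _ => y, hy⟩⟩

theorem forall_elem {P : (α → M) → M → Prop}
    (h : DefinablePred L fun w : Option α → M => P (fun i => w (some i)) (w none)) :
    DefinablePred L fun v => ∀ y, P v y :=
  (h.not.exists_elem (P := fun v y => ¬ P v y)).not.of_iff fun _ => not_exists_not

end DefinablePred

theorem DefinableFamily.mem [Finite α] {B : (α → M) → Set M} (hB : DefinableFamily L B)
    {g : (β → M) → α → M} {f : (β → M) → M} (hg : ∀ i, univ.DefinableFun L fun v => g v i)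
    (hf : univ.DefinableFun L f) : DefinablePred L fun v => f v ∈ B (g v) :=
  hB.comp (g := fun v o => o.elim (f v) (g v)) (Option.forall.2 ⟨hf, hg⟩)

theorem DefinableFamily.definable₁ [Finite α] {B : (α → M) → Set M} (hB : DefinableFamily L B)
    (x : α → M) : univ.Definable₁ L (B x) :=
  hB.mem (fun _ => L.definableFun_const _ (mem_univ _)) (.proj L)

theorem definable₁_of_finite_s18 {s : Set M} (hs : s.Finite) : univ.Definable₁ L s := by
  have := hs.to_subtype
  refine (DefinablePred.exists_finite fun c : s =>
    Definable.singleton_of_mem L (mem_univ c.1)).of_iff fun v => ?_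
  simp

theorem definable₁_of_eventuallyEq {s t : Set M} (hs : univ.Definable₁ L s)
    (h : s =ᶠ[Filter.cofinite] t) : univ.Definable₁ L t := by
  have hd : univ.Definable₁ L {x | ¬ (x ∈ s ↔ x ∈ t)} :=
    definable₁_of_finite_s18 (Filter.eventuallyEq_set.1 h)
  exact (DefinablePred.iff hs (DefinablePred.not hd)).of_iff fun v => by
    simp only [mem_ofPred_eq]
    tauto

end Definability

section DefinableAdd

open Set

/-- Addition of the structure `M` is definable. This is what the structures `(ℤ,+,0)` and
`(ℤ,+,0,A)`, over different languages, have in common. -/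
class DefinableAdd (L : FirstOrder.Language) (M : Type*) [L.Structure M] [Add M] : Prop where
  definableFun_add : univ.DefinableFun L fun v : Fin 2 → M => v 0 + v 1

variable {M : Type*} {L : FirstOrder.Language} [L.Structure M] {α β ι : Type*}

theorem definableFun_add [Add M] [DefinableAdd L M] {f g : (α → M) → M}
    (hf : univ.DefinableFun L f) (hg : univ.DefinableFun L g) :
    univ.DefinableFun L fun v => f v + g v :=
  DefinableFun.comp (g := fun v => ![f v, g v]) (Fin.forall_fin_two.2 ⟨hf, hg⟩)
    DefinableAdd.definableFun_add

variable [AddCommGroup M] [DefinableAdd L M]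

theorem definableFun_sub {f g : (α → M) → M}
    (hf : univ.DefinableFun L f) (hg : univ.DefinableFun L g) :
    univ.DefinableFun L fun v => f v - g v := by
  have hsub : univ.DefinableFun L fun v : Fin 2 → M => v 0 - v 1 := by
    have hgraph := DefinableFun.ofPred_eq (L := L) (.proj L)
      (definableFun_add (L := L) (M := M) (α := Option (Fin 2)) (.proj L (i := none))
        (.proj L (i := some 1))) (f := fun v => v (some 0))
    refine DefinablePred.of_iff hgraph fun v => ?_
    exact sub_eq_iff_eq_add.symm
  exact DefinableFun.comp (g := fun v => ![f v, g v]) (Fin.forall_fin_two.2 ⟨hf, hg⟩) hsub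

theorem definableFun_sum (s : Finset ι) {f : ι → (α → M) → M}
    (hf : ∀ i, univ.DefinableFun L (f i)) : univ.DefinableFun L fun v => ∑ i ∈ s, f i v := by
  induction s using Finset.cons_induction with
  | empty => simpa using L.definableFun_const _ (mem_univ (0 : M))
  | cons i s hi ih => simpa only [Finset.sum_cons] using definableFun_add (hf i) ih

theorem definableFun_zsmul (k : ℤ) {f : (α → M) → M} (hf : univ.DefinableFun L f) :
    univ.DefinableFun L fun v => k • f v := by
  induction k using Int.induction_on with
  | zero => simpa using L.definableFun_const _ (mem_univ (0 : M))
  | succ i ih => simpa [add_zsmul] using definableFun_add ih hf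
  | pred i ih => simpa only [sub_zsmul, one_zsmul, ← sub_eq_add_neg] using definableFun_sub ih hf

theorem definableFun_affineMap_comp [L.Structure ℤ] [DefinableAdd L ℤ] [Finite α]
    (f : (α → ℤ) →ᵃ[ℤ] ℤ) {g : (β → ℤ) → α → ℤ} (hg : ∀ i, univ.DefinableFun L fun v => g v i) :
    univ.DefinableFun L fun v => f (g v) := by
  classical
  have := Fintype.ofFinite α
  obtain ⟨c, d, hf⟩ : ∃ (c : α → ℤ) (d : ℤ), ∀ x, f x = ∑ i, c i • x i + d :=
    ⟨fun i => f.linear fun j => if i = j then 1 else 0, f 0, fun x => by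
      rw [f.decomp, Pi.add_apply, LinearMap.pi_apply_eq_sum_univ f.linear x]
      simp [mul_comm]⟩
  simp only [hf]
  exact definableFun_add (definableFun_sum _ fun i => definableFun_zsmul _ (hg i))
    (L.definableFun_const _ (mem_univ _))

end DefinableAdd

section SignCongruence

variable {V W : Type*} [AddCommGroup V] [AddCommGroup W]

/-- The truth of `P` depends only on a residue modulo some `N` and on the signs of finitely many
integral affine functions. This is a semantic form of the quantifier-free formulas of Presburger
arithmetic. -/
def SignCongruencePred (P : V → Prop) : Prop :=
  ∃ N > (0 : ℤ), ∃ S : Set (V →ᵃ[ℤ] ℤ), S.Finite ∧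
    ∀ x z, (∀ f ∈ S, 0 ≤ f x ↔ 0 ≤ f (x + N • z)) → (P x ↔ P (x + N • z))

theorem affineMap_add_zsmul (f : V →ᵃ[ℤ] W) (x z : V) (N : ℤ) :
    f (x + N • z) = f x + N • f.linear z := by
  simpa [add_comm] using f.map_vadd x (N • z)

namespace SignCongruencePred

variable {P Q : V → Prop}

theorem of_iff (hP : SignCongruencePred P) (h : ∀ x, P x ↔ Q x) : SignCongruencePred Q :=
  (funext fun x => propext (h x) : P = Q) ▸ hP

theorem of_imp {N : ℤ} (hN : 0 < N) {S : Set (V →ᵃ[ℤ] ℤ)} (hS : S.Finite)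
    (h : ∀ x z, (∀ f ∈ S, 0 ≤ f x ↔ 0 ≤ f (x + N • z)) → P x → P (x + N • z)) :
    SignCongruencePred P := by
  refine ⟨N, hN, S, hS, fun x z hxz => ⟨h x z hxz, fun hP => ?_⟩⟩
  have hback : x + N • z + N • -z = x := by rw [smul_neg, add_neg_cancel_right]
  have hsymm := h (x + N • z) (-z)
  rw [hback] at hsymm
  exact hsymm (fun f hf => (hxz f hf).symm) hP

theorem const (p : Prop) : SignCongruencePred fun _ : V => p :=
  ⟨1, one_pos, ∅, Set.finite_empty, fun _ _ _ => Iff.rfl⟩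

theorem le (f g : V →ᵃ[ℤ] ℤ) : SignCongruencePred fun x => f x ≤ g x :=
  ⟨1, one_pos, {g - f}, Set.finite_singleton _, fun _ _ h => by
    simpa only [AffineMap.coe_sub, Pi.sub_apply, sub_nonneg] using h _ rfl⟩

theorem not (hP : SignCongruencePred P) : SignCongruencePred fun x => ¬ P x :=
  let ⟨N, hN, S, hS, h⟩ := hP
  ⟨N, hN, S, hS, fun x z hxz => not_congr (h x z hxz)⟩

theorem and (hP : SignCongruencePred P) (hQ : SignCongruencePred Q) :
    SignCongruencePred fun x => P x ∧ Q x := by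
  obtain ⟨N, hN, S, hS, hP⟩ := hP
  obtain ⟨N', hN', S', hS', hQ⟩ := hQ
  refine ⟨N * N', mul_pos hN hN', S ∪ S', hS.union hS', fun x z hxz => and_congr ?_ ?_⟩
  · rw [mul_smul] at hxz ⊢
    exact hP x _ fun f hf => hxz f (.inl hf)
  · rw [mul_comm, mul_smul] at hxz ⊢
    exact hQ x _ fun f hf => hxz f (.inr hf)

theorem imp (hP : SignCongruencePred P) (hQ : SignCongruencePred Q) :
    SignCongruencePred fun x => P x → Q x :=
  (hP.and hQ.not).not.of_iff fun _ => not_and_not_right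

theorem eq (f g : V →ᵃ[ℤ] ℤ) : SignCongruencePred fun x => f x = g x :=
  ((le f g).and (le g f)).of_iff fun _ => le_antisymm_iff.symm

theorem comp (hP : SignCongruencePred P) (g : W →ᵃ[ℤ] V) :
    SignCongruencePred fun x => P (g x) := by
  obtain ⟨N, hN, S, hS, h⟩ := hP
  refine ⟨N, hN, (·.comp g) '' S, hS.image _, fun x z hxz => ?_⟩
  simp only [Set.forall_mem_image, AffineMap.comp_apply, affineMap_add_zsmul g] at hxz ⊢
  exact h _ _ fun f hf => hxz hf

theorem optionElim {κ : Type*} {P : (Option κ → ℤ) → Prop} (hP : SignCongruencePred P) :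
    SignCongruencePred fun w : (κ → ℤ) × ℤ => P fun o => o.elim w.2 w.1 := by
  let e : ((κ → ℤ) × ℤ) ≃ₗ[ℤ] Option κ → ℤ :=
    (LinearEquiv.prodComm ℤ _ _).trans (LinearEquiv.piOptionEquivProd ℤ (M := fun _ => ℤ)).symm
  have he : ∀ w, e w = fun o => o.elim w.2 w.1 := fun w =>
    funext <| Option.forall.2 ⟨rfl, fun _ => rfl⟩
  exact (hP.comp e.toLinearMap.toAffineMap).of_iff fun w => by rw [← he]; rfl

end SignCongruencePred

theorem exists_pos_forall_dvd {s : Set ℤ} (hs : s.Finite) :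
    ∃ b > 0, ∀ c ∈ s, c ≠ 0 → c ∣ b := by
  refine ⟨∏ c ∈ hs.toFinset.erase 0, |c|,
    Finset.prod_pos fun c hc => abs_pos.2 (Finset.ne_of_mem_erase hc), fun c hc hc0 => ?_⟩
  exact (abs_dvd _ _).1 (Finset.dvd_prod_of_mem _ (by simpa [hc0] using hc))

theorem affineMap_prod_apply (f : V × ℤ →ᵃ[ℤ] ℤ) (x : V) (y : ℤ) :
    f (x, y) = f (x, 0) + f.linear (0, 1) * y := by
  simpa [mul_comm] using affineMap_add_zsmul f (x, 0) (0, 1) y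

/-- When `b` is a common multiple of the coefficients of `y`, finitely many inequalities all become
bounds on the same quantity `b * y`. -/
theorem exists_threshold (f : V × ℤ →ᵃ[ℤ] ℤ) {b : ℤ} (hb : 0 < b)
    (hf : f.linear (0, 1) ≠ 0 → f.linear (0, 1) ∣ b) :
    ∃ q : V →ᵃ[ℤ] ℤ, (∀ x y, 0 ≤ f (x, y) ↔ 0 ≤ q x) ∨ (∀ x y, 0 ≤ f (x, y) ↔ q x ≤ b * y) ∨
      ∀ x y, 0 ≤ f (x, y) ↔ b * y < q x := by
  let u : V →ᵃ[ℤ] ℤ := f.comp (LinearMap.inl ℤ V ℤ).toAffineMap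
  have hu : ∀ x y, f (x, y) = u x + f.linear (0, 1) * y := affineMap_prod_apply f
  generalize f.linear (0, 1) = c at hu hf
  rcases eq_or_ne c 0 with rfl | hc
  · exact ⟨u, .inl fun x y => by simp [hu]⟩
  obtain ⟨d, rfl⟩ := hf hc
  have hscale : ∀ x y, c * d * y - -d * u x = d * (u x + c * y) := fun x y => by ring
  rcases hc.lt_or_gt with hc | hc
  · have hd : d < 0 := neg_of_mul_pos_right hb hc.le
    refine ⟨-d • u + AffineMap.const ℤ V 1, .inr (.inr fun x y => ?_)⟩
    calc 0 ≤ f (x, y) ↔ 0 ≤ -d * (u x + c * y) := by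
          rw [hu, mul_nonneg_iff_of_pos_left (neg_pos.2 hd)]
      _ ↔ c * d * y ≤ -d * u x := by rw [neg_mul, ← hscale, neg_nonneg, sub_nonpos]
      _ ↔ c * d * y < -d * u x + 1 := Int.lt_add_one_iff.symm
  · have hd : 0 < d := pos_of_mul_pos_right hb hc.le
    refine ⟨-d • u, .inr (.inl fun x y => ?_)⟩
    calc 0 ≤ f (x, y) ↔ 0 ≤ d * (u x + c * y) := by rw [hu, mul_nonneg_iff_of_pos_left hd]
      _ ↔ -d * u x ≤ c * d * y := by rw [← hscale, sub_nonneg]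

/-- If some bound holds, the new value keeps the distance modulo `b * N` from `b * y` to the largest
such bound; otherwise it lies below all bounds. -/
theorem exists_shift_le_iff {J : Type*} [Finite J] {b N : ℤ} (hb : 0 < b) (hN : 0 < N)
    (q d : J → ℤ) (h : ∀ j k, ∀ e ∈ Set.Ico 0 (b * N),
      q k ≤ q j + e ↔ q k + b * N * d k ≤ q j + b * N * d j + e) (y : ℤ) :
    ∃ w, ∀ j, q j ≤ b * y ↔ q j + b * N * d j ≤ b * (y + N * w) := by
  have hbN : 0 < b * N := mul_pos hb hN
  by_cases! hex : ∃ j, q j ≤ b * y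
  · obtain ⟨j, hj, hmax⟩ := Set.exists_max_image _ q (Set.toFinite {j | q j ≤ b * y}) hex
    have he := Int.emod_add_mul_ediv (b * y - q j) (b * N)
    set e := (b * y - q j) % (b * N)
    have he_mem : e ∈ Set.Ico 0 (b * N) := ⟨Int.emod_nonneg _ hbN.ne', Int.emod_lt_of_pos _ hbN⟩
    have hle : q j + e ≤ b * y := by
      linarith [mul_nonneg hbN.le (Int.ediv_nonneg (sub_nonneg.2 hj) hbN.le)]
    refine ⟨d j - (b * y - q j) / (b * N), fun k => ?_⟩
    calc q k ≤ b * y ↔ q k ≤ q j + e :=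
          ⟨fun hk => (hmax k hk).trans (le_add_of_nonneg_right he_mem.1), hle.trans'⟩
      _ ↔ q k + b * N * d k ≤ q j + b * N * d j + e := h j k e he_mem
      _ ↔ _ := by
        rw [show b * (y + N * (d j - (b * y - q j) / (b * N))) = q j + b * N * d j + e by
          linear_combination -he]
  · obtain ⟨m, hm⟩ := (Set.finite_range fun j => q j + b * N * d j).bddBelow
    refine ⟨-(|b * y - m| + 1), fun j => iff_of_false (hex j).not_ge (not_le.2 ?_)⟩
    calc b * (y + N * -(|b * y - m| + 1)) = b * y - b * N * (|b * y - m| + 1) := by ring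
      _ ≤ b * y - 1 * (|b * y - m| + 1) := by gcongr; exact hbN
      _ < m := by linarith [le_abs_self (b * y - m)]
      _ ≤ _ := hm ⟨j, rfl⟩

theorem SignCongruencePred.exists {P : V × ℤ → Prop} (hP : SignCongruencePred P) :
    SignCongruencePred fun x => ∃ y, P (x, y) := by
  obtain ⟨N, hN, S, hS, hP⟩ := hP
  have := hS.to_subtype
  obtain ⟨b, hb, hdvd⟩ := exists_pos_forall_dvd (hS.image fun f => f.linear (0, 1))
  choose q hq using fun f : S => exists_threshold f.1 hb (hdvd _ ⟨f, f.2, rfl⟩)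
  let shifted : (S × S) × Set.Ico 0 (b * N) → V →ᵃ[ℤ] ℤ :=
    fun t => q t.1.1 + AffineMap.const ℤ V t.2.1 - q t.1.2
  refine .of_imp (mul_pos hb hN) ((Set.finite_range q).union (Set.finite_range shifted))
    fun x z hxz => ?_
  rintro ⟨y, hy⟩
  have hdiff : ∀ j k, ∀ e ∈ Set.Ico 0 (b * N), q k x ≤ q j x + e ↔
      q k x + b * N * (q k).linear z ≤ q j x + b * N * (q j).linear z + e := fun j k e he => by
    simpa only [shifted, AffineMap.coe_sub, AffineMap.coe_add, Pi.sub_apply, Pi.add_apply,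
      AffineMap.const_apply, sub_nonneg, affineMap_add_zsmul (q _), smul_eq_mul] using
      hxz _ (.inr ⟨((j, k), ⟨e, he⟩), rfl⟩)
  obtain ⟨w, hw⟩ := exists_shift_le_iff hb hN (fun f => q f x) (fun f => (q f).linear z) hdiff y
  have hshift : (x, y) + N • (b • z, w) = (x + (b * N) • z, y + N * w) := by
    simp [mul_comm b, mul_smul]
  refine ⟨y + N * w, hshift ▸ (hP (x, y) (b • z, w) fun f hf => ?_).1 hy⟩
  have hw' : q ⟨f, hf⟩ x ≤ b * y ↔ q ⟨f, hf⟩ (x + (b * N) • z) ≤ b * (y + N * w) := by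
    rw [affineMap_add_zsmul]; exact hw ⟨f, hf⟩
  rw [hshift]
  rcases hq ⟨f, hf⟩ with h | h | h
  · rw [h, h]; exact hxz _ (.inl ⟨_, rfl⟩)
  · rwa [h, h]
  · rw [h, h]; simpa only [not_le] using not_congr hw'

theorem SignCongruencePred.forall {P : V × ℤ → Prop} (hP : SignCongruencePred P) :
    SignCongruencePred fun x => ∀ y, P (x, y) :=
  hP.not.exists.not.of_iff fun _ => not_exists_not

end SignCongruence

section Formulas

open FirstOrder.Language

variable {L : FirstOrder.Language} [L.Structure ℤ] {κ : Type*}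

theorem exists_affineMap_realize_term
    (hF : ∀ (n : ℕ) (f : L.Functions n), ∃ g : (Fin n → ℤ) →ᵃ[ℤ] ℤ, ⇑g = Structure.funMap f)
    (t : L[[(Set.univ : Set ℤ)]].Term κ) :
    ∃ g : (κ → ℤ) →ᵃ[ℤ] ℤ, ∀ v, t.realize v = g v := by
  induction t with
  | var i => exact ⟨AffineMap.proj i, fun _ => rfl⟩
  | @func n f ts ih =>
    choose g hg using ih
    rcases f with f | c
    · obtain ⟨a, ha⟩ := hF n f
      refine ⟨a.comp (AffineMap.pi g), fun v => ?_⟩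
      rw [AffineMap.comp_apply, ha]
      exact congr_arg (Structure.funMap f) (funext fun i => hg i v)
    · cases n with
      | zero => exact ⟨AffineMap.const ℤ _ c.1, fun _ => rfl⟩
      | succ => exact nomatch c

/-- Appending a value to the tuple of bound variables, as a linear map along which
`SignCongruencePred` can be pulled back when a quantifier is eliminated. -/
def snocLinearMap (κ : Type*) (n : ℕ) :
    ((κ → ℤ) × (Fin n → ℤ)) × ℤ →ₗ[ℤ] (κ → ℤ) × (Fin (n + 1) → ℤ) where
  toFun w := (w.1.1, Fin.snoc w.1.2 w.2)
  map_add' w w' := by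
    ext i
    · rfl
    · cases i using Fin.lastCases <;> simp
  map_smul' c w := by
    ext i
    · rfl
    · cases i using Fin.lastCases <;> simp

theorem signCongruencePred_realize
    (hF : ∀ (n : ℕ) (f : L.Functions n), ∃ g : (Fin n → ℤ) →ᵃ[ℤ] ℤ, ⇑g = Structure.funMap f)
    (hR : ∀ (n : ℕ) (r : L.Relations n), SignCongruencePred fun x : Fin n → ℤ =>
      Structure.RelMap r x)
    {n : ℕ} (φ : L[[(Set.univ : Set ℤ)]].BoundedFormula κ n) :
    SignCongruencePred fun v : (κ → ℤ) × (Fin n → ℤ) => φ.Realize v.1 v.2 := by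
  have hterm : ∀ {m} (t : L[[(Set.univ : Set ℤ)]].Term (κ ⊕ Fin m)),
      ∃ g : (κ → ℤ) × (Fin m → ℤ) →ᵃ[ℤ] ℤ, ∀ v, t.realize (Sum.elim v.1 v.2) = g v := fun t =>
    let ⟨g, hg⟩ := exists_affineMap_realize_term hF t
    ⟨g.comp (LinearEquiv.sumArrowLequivProdArrow _ _ ℤ ℤ).symm.toLinearMap.toAffineMap,
      fun _ => hg _⟩
  induction φ with
  | falsum => exact .const False
  | equal t₁ t₂ =>
    obtain ⟨g₁, hg₁⟩ := hterm t₁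
    obtain ⟨g₂, hg₂⟩ := hterm t₂
    simpa only [BoundedFormula.Realize, hg₁, hg₂] using .eq g₁ g₂
  | @rel m l r ts =>
    choose g hg using fun i => hterm (ts i)
    rcases r with r | r
    · simp only [BoundedFormula.Realize, hg]
      exact (hR _ r).comp (AffineMap.pi g)
    · exact nomatch r
  | imp _ _ ih₁ ih₂ => exact ih₁.imp ih₂
  | @all m φ ih => exact (ih.comp (snocLinearMap κ m).toAffineMap).forall

theorem signCongruencePred_of_definable
    (hF : ∀ (n : ℕ) (f : L.Functions n), ∃ g : (Fin n → ℤ) →ᵃ[ℤ] ℤ, ⇑g = Structure.funMap f)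
    (hR : ∀ (n : ℕ) (r : L.Relations n), SignCongruencePred fun x : Fin n → ℤ =>
      Structure.RelMap r x)
    {P : (κ → ℤ) → Prop} (hP : DefinablePred L P) : SignCongruencePred P := by
  obtain ⟨φ, hφ⟩ := hP
  refine ((signCongruencePred_realize hF hR φ).comp
    (LinearMap.inl ℤ (κ → ℤ) (Fin 0 → ℤ)).toAffineMap).of_iff fun v => ?_
  calc BoundedFormula.Realize φ v 0 ↔ φ.Realize v :=
        iff_of_eq (congr_arg (BoundedFormula.Realize φ v) (Subsingleton.elim _ _))
    _ ↔ P v := (Set.ext_iff.1 hφ v).symm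

end Formulas

section FiniteSets

variable {s : Finset ℤ} {a y z : ℤ} {l : ℕ}

/-- Left endpoints of the maximal intervals of a finite set of integers; there is exactly one for
each maximal interval. -/
def leftEnds (s : Finset ℤ) : Finset ℤ := {a ∈ s | a - 1 ∉ s}

/-- Erosion of a finite set of integers: the right endpoints of the intervals of `l + 1` consecutive
elements of `s`. -/
noncomputable def erosion (s : Finset ℤ) (l : ℕ) : Finset ℤ := {y ∈ s | Finset.Icc (y - l) y ⊆ s}

theorem mem_leftEnds : a ∈ leftEnds s ↔ a ∈ s ∧ a - 1 ∉ s := Finset.mem_filter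

theorem mem_erosion : y ∈ erosion s l ↔ Finset.Icc (y - l) y ⊆ s :=
  Finset.mem_filter.trans (and_iff_right_of_imp fun h => h (by simp))

theorem min'_mem_leftEnds (hs : s.Nonempty) : s.min' hs ∈ leftEnds s :=
  mem_leftEnds.2 ⟨s.min'_mem hs, fun h => (sub_one_lt (s.min' hs)).not_ge (s.min'_le _ h)⟩

theorem le_of_leftEnds_eq_singleton (ha : leftEnds s = {a}) (hy : y ∈ s) : a ≤ y := by
  have hmin := min'_mem_leftEnds ⟨y, hy⟩
  rw [ha, Finset.mem_singleton] at hmin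
  exact hmin ▸ s.min'_le y hy

theorem leftEnds_Icc {a b : ℤ} (h : a ≤ b) : leftEnds (Finset.Icc a b) = {a} := by
  ext c
  simp only [mem_leftEnds, Finset.mem_Icc, Finset.mem_singleton]
  omega

theorem exists_mem_leftEnds (hy : y ∉ s) (hz : z ∈ s) (h : y < z) :
    ∃ a ∈ leftEnds s, a ∈ Finset.Ioc y z ∧ Finset.Icc a z ⊆ s := by
  obtain ⟨d, hd, hmax⟩ := (Finset.Icc y z \ s).exists_max_image id ⟨y, by simp [hy, h.le]⟩
  simp only [Finset.mem_sdiff, Finset.mem_Icc, id] at hd hmax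
  have hdz : d ≠ z := fun hdz => hd.2 (hdz ▸ hz)
  have hs : Finset.Icc (d + 1) z ⊆ s := fun c hc => by
    rw [Finset.mem_Icc] at hc
    by_contra hcs
    exact absurd (hmax c ⟨by omega, hcs⟩) (by omega)
  refine ⟨d + 1, mem_leftEnds.2 ⟨hs ?_, by simpa using hd.2⟩, ?_, hs⟩ <;>
    simp only [Finset.mem_Icc, Finset.mem_Ioc] <;> omega

theorem card_le_card_erosion_add (s : Finset ℤ) (l : ℕ) :
    s.card ≤ (erosion s l).card + l * (leftEnds s).card := by
  have hsub : s ⊆ erosion s l ∪ (leftEnds s).biUnion fun a => Finset.Ico a (a + l) := by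
    intro y hy
    simp only [Finset.mem_union, Finset.mem_biUnion, Finset.mem_Ico, mem_erosion]
    refine or_iff_not_imp_left.2 fun hyl => ?_
    obtain ⟨d, hd, hds⟩ := Finset.not_subset.1 hyl
    rw [Finset.mem_Icc] at hd
    have hdy : d ≠ y := fun hdy => hds (hdy ▸ hy)
    obtain ⟨a, ha, hay, -⟩ := exists_mem_leftEnds hds hy (by omega)
    rw [Finset.mem_Ioc] at hay
    exact ⟨a, ha, by omega⟩
  have hcard : ((leftEnds s).biUnion fun a => Finset.Ico a (a + l)).card ≤ (leftEnds s).card * l :=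
    Finset.card_biUnion_le_card_mul _ _ _ fun a _ => by simp
  calc s.card ≤ _ := Finset.card_le_card hsub
    _ ≤ _ := Finset.card_union_le _ _
    _ ≤ (erosion s l).card + l * (leftEnds s).card := by rw [mul_comm l]; gcongr

theorem image_leftEnds_erosion_subset (s : Finset ℤ) (l : ℕ) :
    (leftEnds (erosion s l)).image (· - (l : ℤ)) ⊆ leftEnds s := by
  simp only [Finset.image_subset_iff, mem_leftEnds, mem_erosion]
  rintro e ⟨he, he'⟩
  refine ⟨he (by simp), fun hel => he' fun d hd => ?_⟩
  rw [Finset.mem_Icc] at hd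
  rcases hd.1.eq_or_lt with rfl | hd'
  · rwa [sub_right_comm]
  · exact he (Finset.mem_Icc.2 (by omega))

theorem Icc_subset_of_mem_leftEnds (h : (leftEnds s).card ≤ (leftEnds (erosion s l)).card)
    (ha : a ∈ leftEnds s) : Finset.Icc a (a + l) ⊆ s := by
  have hcard : (leftEnds s).card ≤ ((leftEnds (erosion s l)).image (· - (l : ℤ))).card := by
    rwa [Finset.card_image_of_injective _ sub_left_injective]
  rw [← Finset.eq_of_subset_of_card_le (image_leftEnds_erosion_subset s l) hcard] at ha
  obtain ⟨e, he, rfl⟩ := Finset.mem_image.1 ha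
  simpa using mem_erosion.1 (mem_leftEnds.1 he).1

/-- The shift moves the leftmost maximal interval so that it meets the rightmost one in exactly
`l + 1` points. -/
theorem exists_filter_sub_mem_eq_Icc (hs : s.Nonempty)
    (hl : ∀ a ∈ leftEnds s, Finset.Icc a (a + l) ⊆ s) :
    ∃ t a, {y ∈ s | y - t ∈ s} = Finset.Icc a (a + (l : ℤ)) := by
  set m := s.min' hs
  set M := s.max' hs
  have hfirst : Finset.Icc m (m + l) ⊆ s := hl m (min'_mem_leftEnds hs)
  have hlast : Finset.Icc (M - l) M ⊆ s := by
    intro d hd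
    rw [Finset.mem_Icc] at hd
    by_contra hds
    have hdM : d ≠ M := fun hdM => hds (hdM ▸ s.max'_mem hs)
    obtain ⟨a, ha, haM, -⟩ := exists_mem_leftEnds hds (s.max'_mem hs) (by omega)
    have := s.le_max' _ (hl a ha (Finset.right_mem_Icc.2 (by omega)))
    simp only [Finset.mem_Ioc] at haM
    omega
  refine ⟨M - m - l, M - l, Finset.ext fun y => ?_⟩
  simp only [Finset.mem_filter, Finset.mem_Icc]
  refine ⟨fun ⟨hy, hy'⟩ => ?_, fun hy => ⟨hlast (Finset.mem_Icc.2 (by omega)),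
    hfirst (Finset.mem_Icc.2 (by omega))⟩⟩
  have := s.le_max' _ hy
  have := s.min'_le _ hy'
  omega

theorem card_leftEnds_erosion_lt (hs : s.Nonempty)
    (hl : ∀ t a : ℤ, leftEnds {y ∈ s | y - t ∈ s} = {a} → a + l ∉ s.filter fun y => y - t ∈ s) :
    (leftEnds (erosion s l)).card < (leftEnds s).card := by
  by_contra! h
  obtain ⟨t, a, hta⟩ := exists_filter_sub_mem_eq_Icc hs fun a => Icc_subset_of_mem_leftEnds h
  refine hl t a ?_ ?_ <;> rw [hta]
  · exact leftEnds_Icc (by omega)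
  · exact Finset.right_mem_Icc.2 (by omega)

end FiniteSets

section BoundedFamilies

open Set

variable {L : FirstOrder.Language} [L.Structure ℤ] [DefinableAdd L ℤ] {α : Type*} [Finite α]

/-- Otherwise `ℕ` would be the set of distances from the left end of an interval of the family to
the other elements. -/
theorem exists_add_notMem_of_leftEnds_eq_singleton (hN : ¬ univ.Definable₁ L (Ici (0 : ℤ)))
    {F : (α → ℤ) → Finset ℤ} (hF : DefinableFamily L fun x => (F x : Set ℤ)) :
    ∃ l : ℕ, ∀ x a, leftEnds (F x) = {a} → a + (l : ℤ) ∉ F x := by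
  have hdef : DefinablePred L fun v : Fin 1 → ℤ =>
      ∃ x a, (∀ b, (b ∈ F x ∧ b - 1 ∉ F x) ↔ b = a) ∧ a + v 0 ∈ F x :=
    .exists_tuple <| .exists_elem <| .and
      (.forall_elem <| .iff
        (.and (hF.mem (fun _ => .proj L) (.proj L)) (.not <| hF.mem (fun _ => .proj L)
          (definableFun_sub (.proj L) (L.definableFun_const _ (mem_univ _)))))
        (DefinableFun.ofPred_eq (.proj L) (.proj L)))
      (hF.mem (fun _ => .proj L) (definableFun_add (.proj L) (.proj L)))
  have hsingle : ∀ x a, (∀ b, (b ∈ F x ∧ b - 1 ∉ F x) ↔ b = a) ↔ leftEnds (F x) = {a} :=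
    fun x a => by simp only [Finset.ext_iff, mem_leftEnds, Finset.mem_singleton]
  simp only [hsingle] at hdef
  by_contra! hcon
  refine hN (DefinablePred.of_iff hdef fun v => ⟨fun ⟨x, a, ha, hd⟩ => ?_, fun hd => ?_⟩)
  · exact nonneg_of_le_add_right (le_of_leftEnds_eq_singleton ha hd)
  · obtain ⟨x, a, ha, hd'⟩ := hcon (v 0).toNat
    exact ⟨x, a, ha, by rwa [Int.toNat_of_nonneg hd] at hd'⟩

theorem definableFamily_filter_sub_mem {F : (α → ℤ) → Finset ℤ}
    (hF : DefinableFamily L fun x => (F x : Set ℤ)) :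
    DefinableFamily L fun x : Option α → ℤ =>
      ({y ∈ F fun i => x (some i) | y - x none ∈ F fun i => x (some i)} : Finset ℤ) := by
  simp only [DefinableFamily, Finset.coe_filter]
  exact (hF.mem (fun _ => .proj L) (.proj L)).and
    (hF.mem (fun _ => .proj L) (definableFun_sub (.proj L) (.proj L)))

theorem definableFamily_erosion {F : (α → ℤ) → Finset ℤ}
    (hF : DefinableFamily L fun x => (F x : Set ℤ)) (l : ℕ) :
    DefinableFamily L fun x => (erosion (F x) l : Set ℤ) := by
  have hmem : ∀ (s : Finset ℤ) y, (∀ d : Finset.Icc 0 (l : ℤ), y - d.1 ∈ s) ↔ y ∈ erosion s l := by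
    simp only [mem_erosion, Finset.subset_iff, Subtype.forall, Finset.mem_Icc]
    exact fun s y => ⟨fun h d hd => by simpa using h (y - d) (by omega),
      fun h d hd => h (by omega)⟩
  simp only [DefinableFamily, Finset.mem_coe, ← hmem]
  exact .forall_finite fun d => hF.mem (fun _ => .proj L)
    (definableFun_sub (.proj L) (L.definableFun_const _ (mem_univ d.1)))

theorem exists_card_le_of_card_leftEnds_le (hN : ¬ univ.Definable₁ L (Ici (0 : ℤ))) (k : ℕ)
    {F : (α → ℤ) → Finset ℤ} (hF : DefinableFamily L fun x => (F x : Set ℤ))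
    (hk : ∀ x, (leftEnds (F x)).card ≤ k) : ∃ m, ∀ x, (F x).card ≤ m := by
  induction k generalizing F with
  | zero =>
    refine ⟨0, fun x => Nat.le_zero.2 <| Finset.card_eq_zero.2 ?_⟩
    by_contra! hx
    exact (Finset.card_pos.2 ⟨_, min'_mem_leftEnds hx⟩).not_ge (hk x)
  | succ k ih =>
    obtain ⟨l, hl⟩ := exists_add_notMem_of_leftEnds_eq_singleton hN
      (definableFamily_filter_sub_mem hF)
    have herosion : ∀ x, (leftEnds (erosion (F x) l)).card ≤ k := fun x => by
      rcases (F x).eq_empty_or_nonempty with hx | hx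
      · simp [hx, erosion, leftEnds]
      · exact Nat.le_of_lt_succ ((card_leftEnds_erosion_lt hx fun t a =>
          hl (fun o => o.elim t x) a).trans_le (hk x))
    obtain ⟨m, hm⟩ := ih (definableFamily_erosion hF l) herosion
    refine ⟨m + l * (k + 1), fun x => ?_⟩
    calc (F x).card ≤ _ := card_le_card_erosion_add (F x) l
      _ ≤ m + l * (k + 1) := by gcongr; exacts [hm x, hk x]

end BoundedFamilies

section SignDetermined

open Set Filter

variable {J : Type*} {b u : J → ℤ} {B : Set ℤ}

/-- Membership of `t` in `B` depends only on the signs of the affine expressions `b j * t + u j`.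
On a residue class the fibres of a `SignCongruencePred` have this form, with slopes `b` that do not
depend on the fibre. -/
def SignDetermined (b u : J → ℤ) (B : Set ℤ) : Prop :=
  ∀ t t', (∀ j, 0 ≤ b j * t + u j ↔ 0 ≤ b j * t' + u j) → t ∈ B → t' ∈ B

theorem SignDetermined.compl (h : SignDetermined b u B) : SignDetermined b u Bᶜ :=
  fun t t' htt' ht ht' => ht (h t' t (fun j => (htt' j).symm) ht')

theorem not_lt_of_sign_change {c d a a' : ℤ} (ha : ¬ (0 ≤ c * (a - 1) + d ↔ 0 ≤ c * a + d))
    (ha' : ¬ (0 ≤ c * (a' - 1) + d ↔ 0 ≤ c * a' + d)) : ¬ a < a' := by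
  intro h
  rcases le_total 0 c with hc | hc
  · have h₁ : c * (a - 1) ≤ c * a := mul_le_mul_of_nonneg_left (by omega) hc
    have h₂ : c * a ≤ c * (a' - 1) := mul_le_mul_of_nonneg_left (by omega) hc
    have h₃ : c * (a' - 1) ≤ c * a' := mul_le_mul_of_nonneg_left (by omega) hc
    omega
  · have h₁ : c * a ≤ c * (a - 1) := mul_le_mul_of_nonpos_left (by omega) hc
    have h₂ : c * (a' - 1) ≤ c * a := mul_le_mul_of_nonpos_left (by omega) hc
    have h₃ : c * a' ≤ c * (a' - 1) := mul_le_mul_of_nonpos_left (by omega) hc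
    omega

theorem SignDetermined.card_leftEnds_le [Fintype J] {s : Finset ℤ} (h : SignDetermined b u s) :
    (leftEnds s).card ≤ Fintype.card J := by
  refine Finset.card_le_card_of_forall_subsingleton (t := Finset.univ)
    (fun a j => ¬ (0 ≤ b j * (a - 1) + u j ↔ 0 ≤ b j * a + u j)) (fun a ha => ?_) ?_
  · obtain ⟨has, has'⟩ := mem_leftEnds.1 ha
    by_contra! hcon
    exact has' (h a (a - 1) (fun j => (hcon j (Finset.mem_univ j)).symm) has)
  · rintro j - a ⟨-, ha⟩ a' ⟨-, ha'⟩
    exact le_antisymm (not_lt.1 (not_lt_of_sign_change ha' ha))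
      (not_lt.1 (not_lt_of_sign_change ha ha'))

theorem eventually_atTop_sign (c d : ℤ) :
    (∀ᶠ t in atTop, 0 ≤ c * t + d) ∨ ∀ᶠ t in atTop, ¬ 0 ≤ c * t + d := by
  rcases lt_trichotomy c 0 with hc | rfl | hc
  · refine .inr ((eventually_gt_atTop |d|).mono fun t ht => not_le.2 ?_)
    nlinarith [le_abs_self d, abs_nonneg d]
  · by_cases hd : 0 ≤ d <;> simp [hd]
  · refine .inl ((eventually_gt_atTop |d|).mono fun t ht => ?_)
    nlinarith [neg_abs_le d, abs_nonneg d]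

theorem eventually_atBot_sign (c d : ℤ) :
    (∀ᶠ t in atBot, 0 ≤ c * t + d) ∨ ∀ᶠ t in atBot, ¬ 0 ≤ c * t + d := by
  simpa only [neg_mul_neg] using (eventually_atTop_sign (-c) d).imp
    tendsto_neg_atBot_atTop.eventually tendsto_neg_atBot_atTop.eventually

theorem SignDetermined.eventually_mem_or_notMem [Finite J] (h : SignDetermined b u B)
    {l : Filter ℤ}
    (hl : ∀ c d : ℤ, (∀ᶠ t in l, 0 ≤ c * t + d) ∨ ∀ᶠ t in l, ¬ 0 ≤ c * t + d) :
    (∀ᶠ t in l, t ∈ B) ∨ ∀ᶠ t in l, t ∉ B := by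
  have hsign : ∀ j, ∃ p : Prop, ∀ᶠ t in l, (0 ≤ b j * t + u j ↔ p) := fun j =>
    (hl (b j) (u j)).elim (fun h => ⟨True, by simpa using h⟩) fun h => ⟨False, by simpa using h⟩
  choose p hp using hsign
  by_cases hex : ∃ t ∈ B, ∀ j, (0 ≤ b j * t + u j ↔ p j)
  · obtain ⟨t, ht, htp⟩ := hex
    exact .inl ((eventually_all.2 hp).mono fun t' ht' =>
      h t t' (fun j => (htp j).trans (ht' j).symm) ht)
  · exact .inr ((eventually_all.2 hp).mono fun t ht htB => hex ⟨t, htB, ht⟩)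

theorem SignDetermined.finite_or_finite_compl {L : FirstOrder.Language} [L.Structure ℤ]
    (hN : ¬ univ.Definable₁ L (Ici (0 : ℤ))) [Finite J] (h : SignDetermined b u B)
    (hB : univ.Definable₁ L B) : B.Finite ∨ Bᶜ.Finite := by
  have hcofinite : ∀ {p : ℤ → Prop}, (∀ᶠ t in atBot, p t) → (∀ᶠ t in atTop, p t) →
      ∀ᶠ t in cofinite, p t := fun hbot htop => by
    rw [Int.cofinite_eq]
    exact eventually_sup.2 ⟨hbot, htop⟩
  rcases h.eventually_mem_or_notMem eventually_atBot_sign with hbot | hbot <;>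
    rcases h.eventually_mem_or_notMem eventually_atTop_sign with htop | htop
  · exact .inr (hcofinite hbot htop)
  · refine absurd (definable₁_of_eventuallyEq (s := Bᶜ) hB.compl ?_) hN
    refine eventuallyEq_set.2 (hcofinite ?_ ?_)
    · filter_upwards [hbot, eventually_lt_atBot 0] with t ht ht0
      simp [ht, ht0]
    · filter_upwards [htop, eventually_ge_atTop 0] with t ht ht0
      simp [ht, ht0]
  · refine absurd (definable₁_of_eventuallyEq hB ?_) hN
    refine eventuallyEq_set.2 (hcofinite ?_ ?_)
    · filter_upwards [hbot, eventually_lt_atBot 0] with t ht ht0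
      simp [ht, ht0]
    · filter_upwards [htop, eventually_ge_atTop 0] with t ht ht0
      simp [ht, ht0]
  · exact .inl ((eventually_cofinite.1 (hcofinite hbot htop)).subset fun _ => not_not.2)

/-- Otherwise no sign would change on `[t, t + m]`, and this interval would lie in `s`. -/
theorem SignDetermined.exists_abs_le [Fintype J] {s : Finset ℤ} (h : SignDetermined b u s) {m : ℕ}
    (hm : s.card ≤ m) {t : ℤ} (ht : t ∈ s) :
    ∃ j, b j ≠ 0 ∧ |b j * t + u j| ≤ m * ∑ i, |b i| := by
  by_contra! hcon
  have hsub : Finset.Icc t (t + m) ⊆ s := fun t' ht' => by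
    refine h t t' (fun j => ?_) ht
    rcases eq_or_ne (b j) 0 with hj | hj
    · simp [hj]
    have ht0 : 0 ≤ t' - t := sub_nonneg.2 (Finset.mem_Icc.1 ht').1
    have hshort : |b j * (t' - t)| ≤ m * ∑ i, |b i| := by
      rw [abs_mul, abs_of_nonneg ht0, mul_comm]
      gcongr
      · exact sub_le_iff_le_add'.2 (Finset.mem_Icc.1 ht').2
      · exact Finset.single_le_sum (fun i _ => abs_nonneg (b i)) (Finset.mem_univ j)
    have hstep : b j * t' + u j = b j * t + u j + b j * (t' - t) := by ring
    have hfar := hcon j hj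
    rw [hstep]
    rw [abs_le] at hshort
    rw [lt_abs] at hfar
    omega
  have hcard := Finset.card_le_card hsub
  rw [Int.card_Icc] at hcard
  omega

end SignDetermined

theorem finite_compl_iff_forall_exists_add_mem {G : Type*} [AddGroup G] [Infinite G] {s : Set G}
    (hs : s.Finite ∨ sᶜ.Finite) : sᶜ.Finite ↔ ∀ d, ∃ t ∈ s, t + d ∈ s := by
  refine ⟨fun hc d => ?_, fun h => hs.resolve_left fun hfin => ?_⟩
  · have hd : ((· + d) ⁻¹' sᶜ).Finite := hc.preimage (add_left_injective d).injOn
    obtain ⟨t, ht⟩ := (hc.union hd).infinite_compl.nonempty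
    exact ⟨t, by simpa using ht⟩
  · obtain ⟨d, hd⟩ := (hfin.image2 (fun t t' => -t + t') hfin).infinite_compl.nonempty
    obtain ⟨t, ht, htd⟩ := h d
    exact hd ⟨t, ht, t + d, htd, neg_add_cancel_left t d⟩

section Transfer

open Set

variable {L L' : FirstOrder.Language} [L.Structure ℤ] [L'.Structure ℤ] [DefinableAdd L ℤ]
  [DefinableAdd L' ℤ] {α J : Type*} [Finite α] [Finite J] {b : J → ℤ}
  {u : J → (α → ℤ) →ᵃ[ℤ] ℤ} {B : (α → ℤ) → Set ℤ}

theorem definablePred_mul_add_affineMap_eq (k : ℤ) (f : (α → ℤ) →ᵃ[ℤ] ℤ) (c : ℤ) :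
    DefinablePred L fun w : Option α → ℤ => k * w none + f (fun i => w (some i)) = c :=
  DefinableFun.ofPred_eq (definableFun_add (definableFun_zsmul _ (.proj L))
    (definableFun_affineMap_comp _ fun _ => .proj L)) (L.definableFun_const _ (mem_univ _))

theorem exists_abs_le_of_finite (hN : ¬ univ.Definable₁ L (Ici (0 : ℤ)))
    {u : (α → ℤ) → J → ℤ} (hB : DefinableFamily L B) (hdet : ∀ x, SignDetermined b (u x) (B x))
    (hfin : ∀ x, (B x).Finite) :
    ∃ C : ℤ, ∀ x, ∀ t ∈ B x, ∃ j, b j ≠ 0 ∧ |b j * t + u x j| ≤ C := by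
  have := Fintype.ofFinite J
  lift B to (α → ℤ) → Finset ℤ using hfin
  obtain ⟨m, hm⟩ := exists_card_le_of_card_leftEnds_le hN _ hB fun x => (hdet x).card_leftEnds_le
  exact ⟨m * ∑ i, |b i|, fun x t ht => (hdet x).exists_abs_le (hm x) ht⟩

/-- The elements of the fibres are the solutions of finitely many families of linear equations, so
only the set of indices at which a given equation contributes has to be transferred. -/
theorem DefinableFamily.of_finite (hN : ¬ univ.Definable₁ L (Ici (0 : ℤ)))
    (hLL' : ∀ P : (α → ℤ) → Prop, DefinablePred L P → DefinablePred L' P)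
    (hB : DefinableFamily L B) (hdet : ∀ x, SignDetermined b (fun j => u j x) (B x))
    (hfin : ∀ x, (B x).Finite) : DefinableFamily L' B := by
  obtain ⟨C, hC⟩ := exists_abs_le_of_finite hN hB hdet hfin
  have hsolvable (j : J) (c : ℤ) :
      DefinablePred L' fun x => ∃ s, b j * s + u j x = c ∧ s ∈ B x :=
    hLL' _ <| .exists_elem <| (definablePred_mul_add_affineMap_eq ..).and hB
  have hmem (x : α → ℤ) (t : ℤ) : (∃ (j : {j // b j ≠ 0}) (c : Icc (-C) C),
      b j * t + u j x = c ∧ ∃ s, b j * s + u j x = c ∧ s ∈ B x) ↔ t ∈ B x := by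
    constructor
    · rintro ⟨⟨j, hj⟩, c, htc, s, hsc, hs⟩
      rwa [mul_left_cancel₀ hj (add_right_cancel (htc.trans hsc.symm))]
    · intro ht
      obtain ⟨j, hj, hjC⟩ := hC x t ht
      exact ⟨⟨j, hj⟩, ⟨_, abs_le.1 hjC⟩, rfl, t, rfl, ht⟩
  refine .of_iff ?_ fun w => hmem (fun i => w (some i)) (w none)
  exact .exists_finite fun j => .exists_finite fun c =>
    (definablePred_mul_add_affineMap_eq ..).and ((hsolvable j c).reindex some)

theorem DefinableFamily.of_signDetermined (hN : ¬ univ.Definable₁ L (Ici (0 : ℤ)))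
    (hLL' : ∀ P : (α → ℤ) → Prop, DefinablePred L P → DefinablePred L' P)
    (hB : DefinableFamily L B) (hdet : ∀ x, SignDetermined b (fun j => u j x) (B x)) :
    DefinableFamily L' B := by
  let D (x : α → ℤ) : Prop := ∀ d, ∃ t ∈ B x, t + d ∈ B x
  have hD : DefinablePred L D :=
    .forall_elem <| .exists_elem <| .and (hB.mem (fun _ => .proj L) (.proj L))
      (hB.mem (fun _ => .proj L) (definableFun_add (.proj L) (.proj L)))
  have hcofinite (x : α → ℤ) : (B x)ᶜ.Finite ↔ D x :=
    finite_compl_iff_forall_exists_add_mem ((hdet x).finite_or_finite_compl hN (hB.definable₁ x))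
  have houter : DefinableFamily L' fun x => {t | D x ∧ t ∉ B x} := by
    refine .of_finite (b := b) (u := u) hN hLL' ((hD.reindex some).and hB.not) (fun x => ?_)
      fun x => ?_
    · by_cases hx : D x
      · simpa [hx, compl_def] using (hdet x).compl
      · simp [hx, SignDetermined]
    · by_cases hx : D x
      · simpa [hx, compl_def] using (hcofinite x).2 hx
      · simp [hx]
  have hinner : DefinableFamily L' fun x => {t | ¬ D x ∧ t ∈ B x} := by
    refine .of_finite (b := b) (u := u) hN hLL' ((hD.not.reindex some).and hB) (fun x => ?_)
      fun x => ?_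
    · by_cases hx : D x
      · simp [hx, SignDetermined]
      · simpa [hx] using hdet x
    · by_cases hx : D x
      · simp [hx]
      · simpa [hx] using ((hdet x).finite_or_finite_compl hN (hB.definable₁ x)).resolve_right
          (mt (hcofinite x).1 hx)
  refine ((((hLL' D hD).reindex some).and houter.not).or hinner).of_iff fun v => ?_
  simp only [mem_ofPred_eq]
  tauto

theorem DefinableFamily.of_signCongruencePred (hN : ¬ univ.Definable₁ L (Ici (0 : ℤ)))
    (hLL' : ∀ P : (α → ℤ) → Prop, DefinablePred L P → DefinablePred L' P)
    (hB : DefinableFamily L B)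
    (hSC : SignCongruencePred fun w : (α → ℤ) × ℤ => w.2 ∈ B w.1) : DefinableFamily L' B := by
  obtain ⟨N, hN0, S, hS, h⟩ := hSC
  have := hS.to_subtype
  have hresidue (r : ℤ) : DefinableFamily L' fun x => {t | r + N * t ∈ B x} := by
    refine .of_signDetermined (J := S) (b := fun f => f.1.linear (0, 1) * N)
      (u := fun f => f.1.comp (LinearMap.inl ℤ (α → ℤ) ℤ).toAffineMap +
        AffineMap.const ℤ _ (f.1.linear (0, 1) * r)) hN hLL' ?_ fun x t t' htt' => ?_
    · exact hB.mem (fun _ => .proj L) (definableFun_add (L.definableFun_const _ (mem_univ r))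
        (definableFun_zsmul N (.proj L)))
    · have hshift : (x, r + N * t) + N • ((0 : α → ℤ), t' - t) = (x, r + N * t') := by
        ext <;> simp; ring
      have hsign (f : S) (s : ℤ) : f.1 (x, r + N * s) =
          f.1.linear (0, 1) * N * s + (f.1 (x, 0) + f.1.linear (0, 1) * r) := by
        rw [affineMap_prod_apply]; ring
      refine (hshift ▸ h (x, r + N * t) (0, t' - t) fun f hf => ?_).1
      rw [hshift, hsign ⟨f, hf⟩, hsign ⟨f, hf⟩]
      exact htt' ⟨f, hf⟩
  have hmem (x : α → ℤ) (y : ℤ) :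
      (∃ (r : Ico 0 N) (t : ℤ), y = r + N * t ∧ r + N * t ∈ B x) ↔ y ∈ B x :=
    ⟨fun ⟨_, _, hy, ht⟩ => hy ▸ ht, fun hy =>
      have hdiv : y = y % N + N * (y / N) := (Int.emod_add_mul_ediv y N).symm
      ⟨⟨y % N, Int.emod_nonneg _ hN0.ne', Int.emod_lt_of_pos _ hN0⟩, y / N, hdiv, hdiv ▸ hy⟩⟩
  refine .of_iff ?_ fun w => hmem (fun i => w (some i)) (w none)
  exact .exists_finite fun r => .exists_elem <| .and
    (DefinableFun.ofPred_eq (.proj L') (definableFun_add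
      (L'.definableFun_const _ (mem_univ r.1)) (definableFun_zsmul N (.proj L'))))
    ((hresidue r).mem (fun _ => .proj L') (.proj L'))

theorem definablePred_of_not_definable₁_Ici (hN : ¬ univ.Definable₁ L (Ici (0 : ℤ)))
    (hSC : ∀ {κ : Type} {P : (κ → ℤ) → Prop}, DefinablePred L P → SignCongruencePred P)
    {κ : Type} [Finite κ] {P : (κ → ℤ) → Prop} (hP : DefinablePred L P) : DefinablePred L' P := by
  induction κ using Finite.induction_empty_option with
  | of_equiv e ih =>
    simpa using (ih (hP.reindex e.symm)).reindex e
  | h_empty =>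
    exact (DefinablePred.const (P 0)).of_iff fun v => by rw [Subsingleton.elim v 0]
  | @h_option κ _ ih =>
    let B (x : κ → ℤ) : Set ℤ := {y | P fun o => o.elim y x}
    have hmem (w : Option κ → ℤ) : P w ↔ w none ∈ B fun i => w (some i) :=
      iff_of_eq <| congr_arg P <| funext <| Option.forall.2 ⟨rfl, fun _ => rfl⟩
    have hB : DefinableFamily L' B :=
      .of_signCongruencePred hN (fun _ => ih) (hP.of_iff hmem) (hSC hP).optionElim
    exact hB.of_iff fun w => (hmem w).symm

end Transfer

section Structures

open FirstOrder.Language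

instance : DefinableAdd LangGrp ℤ :=
  ⟨.of_empty (.fun_symbol (L := LangGrp) (n := 2) ())⟩

theorem definableAdd_relStructure {n : ℕ} (A : Set (Fin n → ℤ)) :
    letI := relStructure A
    DefinableAdd (LangGrpRel n) ℤ :=
  letI := relStructure A
  ⟨.of_empty (.fun_symbol (L := LangGrpRel n) (n := 2) ())⟩

theorem exists_affineMap_eq_of_grpFunc {F : ∀ n, grpFunc n → (Fin n → ℤ) → ℤ}
    (hzero : ∀ f x, F 0 f x = 0) (hadd : ∀ f x, F 2 f x = x 0 + x 1) :
    ∀ (n : ℕ) (f : grpFunc n), ∃ g : (Fin n → ℤ) →ᵃ[ℤ] ℤ, ⇑g = F n f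
  | 0, f => ⟨0, funext fun x => (hzero f x).symm⟩
  | 2, f =>
    let coord : Fin 2 → (Fin 2 → ℤ) →ᵃ[ℤ] ℤ := AffineMap.proj
    ⟨coord 0 + coord 1, funext fun x => (hadd f x).symm⟩
  | 1, f => Empty.elim f
  | _ + 3, f => Empty.elim f

theorem relMap_relStructure {n : ℕ} (A : Set (Fin n → ℤ)) (r : (LangGrpRel n).Relations n)
    (x : Fin n → ℤ) :
    letI := relStructure A
    Structure.RelMap r x ↔ x ∈ A :=
  iff_of_eq (dif_pos rfl)

theorem definablePred_mem_relStructure {n : ℕ} (A : Set (Fin n → ℤ)) :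
    letI := relStructure A
    DefinablePred (LangGrpRel n) fun v => v ∈ A := by
  let := relStructure A
  let r : (LangGrpRel n).Relations n := cast (if_pos rfl).symm ()
  refine DefinablePred.of_iff (Set.Definable.mono (Set.empty_definable_iff.2
    ⟨r.formula Term.var, rfl⟩) (Set.empty_subset _)) fun v => ?_
  simpa using relMap_relStructure A r v

theorem signCongruencePred_of_isPresburger {n : ℕ} {A : Set (Fin n → ℤ)} (hA : IsPresburger A) :
    SignCongruencePred fun v => v ∈ A := by
  refine signCongruencePred_of_definable (L := LangOrdGrp) ?_ ?_ hA
  · rintro n (f | f)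
    · exact exists_affineMap_eq_of_grpFunc (F := fun _ => Structure.funMap (L := LangGrp))
        (fun _ _ => rfl) (fun _ _ => rfl) n f
    · exact nomatch f
  · rintro n (r | r)
    · exact nomatch r
    · cases r
      exact .le (V := Fin 2 → ℤ) (AffineMap.proj 0) (AffineMap.proj 1)

theorem signCongruencePred_of_relStructure {n : ℕ} {A : Set (Fin n → ℤ)}
    (hA : SignCongruencePred fun v => v ∈ A) {κ : Type*} {P : (κ → ℤ) → Prop} :
    letI := relStructure A
    DefinablePred (LangGrpRel n) P → SignCongruencePred P := by
  let := relStructure A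
  refine signCongruencePred_of_definable (L := LangGrpRel n)
    (exists_affineMap_eq_of_grpFunc (fun _ _ => rfl) fun _ _ => rfl) fun m r => ?_
  by_cases h : m = n
  · subst h
    exact hA.of_iff fun v => (relMap_relStructure A r v).symm
  · exact (cast (if_neg h) r : Empty).elim

end Structures

/-- main theorem: for every `n ≥ 1`, every Presburger subset of `ℤⁿ` is either
definable in `(ℤ,+,0)` or defines the ordering; i.e. any expansion of `(ℤ,+,0)` which is a reduct
of `(ℤ,+,<,0)` is interdefinable with `(ℤ,+,0)` or with `(ℤ,+,<,0)`. -/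
theorem stmt18 (n : ℕ) (hn : 1 ≤ n) (A : Set (Fin n → ℤ)) (hA : IsPresburger A) :
    IsGroupDefinable A ∨ DefinesOrdering A := by
  let := relStructure A
  by_cases hN : Set.univ.Definable₁ (LangGrpRel n) (Set.Ici (0 : ℤ))
  · exact .inr hN
  · have := definableAdd_relStructure A
    have hSC : ∀ {κ : Type} {P : (κ → ℤ) → Prop},
        DefinablePred (LangGrpRel n) P → SignCongruencePred P :=
      signCongruencePred_of_relStructure (signCongruencePred_of_isPresburger hA)
    exact .inl (definablePred_of_not_definable₁_Ici hN hSC (definablePred_mem_relStructure A))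
end
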